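/- arXiv:2205.08618 — 11 statements merged into one kernel-verified Lean document; each statement's English description precedes it below -/
import Mathlib

section
/- Let λ > 0 be a real number and let f : ℝ → ℝ be given on [0, λ] by a power series f(x) = Σ_{n=0}^∞ a_n x^n whose radius of convergence is strictly greater than λ. Then ∫_0^λ f(x) dx = Σ_{n=0}^∞ (λ/(λ+1))^{n+1} · (1/(n+1)) · Σ_{m=0}^n b_m, where b_n = Σ_{k=0}^n C(n,k) a_k is the binomial transform of the sequence (a_n). -/
open Finset

/-!
Put `t = lam / (lam + 1)`, so that `t / (1 - t) = lam`. Two binomial identities reduce the `n`-th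
term of the series to a single sum: the hockey-stick identity gives
`∑_{m ≤ n} C(m, k) = C(n + 1, k + 1)`, and `C(n + 1, k + 1) / (n + 1) = C(n, k) / (k + 1)`. Hence
the series is the row-by-row sum of the double family `a k / (k + 1) * (C(n, k) * t ^ (n + 1))`.
Summing over `n` first, the negative binomial series gives
`∑_n C(n, k) * t ^ (n + 1) = (t / (1 - t)) ^ (k + 1) = lam ^ (k + 1)`, so the column sums are
`a k * lam ^ (k + 1) / (k + 1)`, the integrals of the terms of the power series. Since `t ≥ 0`,
the same computation with `|a k|` shows that the double family is absolutely summable, and the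
order of summation can be exchanged.
-/

lemma choose_geometric_hasSum (lam : ℝ) (hlam : 0 < lam) (k : ℕ) :
    HasSum (fun n : ℕ => (n.choose k : ℝ) * (lam / (lam + 1)) ^ (n + 1)) (lam ^ (k + 1)) := by
  have h1 : (0 : ℝ) < lam + 1 := by linarith
  have ht : ‖lam / (lam + 1)‖ < 1 := by
    rw [Real.norm_of_nonneg (by positivity), div_lt_one h1]; linarith
  have h := (hasSum_choose_mul_geometric_of_norm_lt_one k ht).mul_right
    ((lam / (lam + 1)) ^ (k + 1))
  have hval : 1 / (1 - lam / (lam + 1)) ^ (k + 1) * (lam / (lam + 1)) ^ (k + 1)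
      = lam ^ (k + 1) := by
    have : 1 - lam / (lam + 1) = 1 / (lam + 1) := by field_simp; ring
    rw [this, div_pow, div_pow]
    field_simp
    simp
  rw [hval] at h
  -- the terms with `n < k` vanish, so the series may be shifted by `k`
  refine ((add_left_injective k).hasSum_iff ?_).1 (h.congr_fun ?_)
  · intro n hn
    have : n < k := by
      by_contra! hk
      exact hn ⟨n - k, Nat.sub_add_cancel hk⟩
    simp [Nat.choose_eq_zero_of_lt this]
  · intro n
    simp only [Function.comp]
    ring

lemma hockey_stick (n k : ℕ) :
    ∑ m ∈ range (n + 1), m.choose k = (n + 1).choose (k + 1) := by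
  induction n with
  | zero => cases k <;> simp [Nat.choose_succ_succ]
  | succ n ih => rw [sum_range_succ, ih, Nat.choose_succ_succ (n + 1) k, add_comm]

lemma term_eq (a : ℕ → ℝ) (t : ℝ) (n : ℕ) :
    t ^ (n + 1) * (1 / ((n : ℝ) + 1)) *
        ∑ m ∈ range (n + 1), ∑ k ∈ range (m + 1), (m.choose k : ℝ) * a k
      = ∑ k ∈ range (n + 1), a k / ((k : ℝ) + 1) * ((n.choose k : ℝ) * t ^ (n + 1)) := by
  have h1 : ∑ m ∈ range (n + 1), ∑ k ∈ range (m + 1), (m.choose k : ℝ) * a k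
      = ∑ k ∈ range (n + 1), ((n + 1).choose (k + 1) : ℝ) * a k := by
    calc _ = ∑ m ∈ range (n + 1), ∑ k ∈ range (n + 1), (m.choose k : ℝ) * a k := by
          refine sum_congr rfl fun m hm => sum_subset ?_ ?_
          · intro k hk
            simp only [mem_range] at *
            omega
          · intro k _ hk
            rw [Nat.choose_eq_zero_of_lt (by simp only [mem_range] at hk; omega)]
            simp
      _ = _ := by
          rw [sum_comm]
          refine sum_congr rfl fun k _ => ?_
          rw [← sum_mul, ← hockey_stick n k]
          push_cast
          rfl
  rw [h1, mul_sum]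
  refine sum_congr rfl fun k _ => ?_
  have h2 : ((n : ℝ) + 1) * n.choose k = (n + 1).choose (k + 1) * ((k : ℝ) + 1) := by
    exact_mod_cast Nat.add_one_mul_choose_eq n k
  have hn : (n : ℝ) + 1 ≠ 0 := by positivity
  have hk : (k : ℝ) + 1 ≠ 0 := by positivity
  field_simp
  linear_combination (-a k) * t ^ (n + 1) * h2

lemma hasSum_integral_powerSeries (lam : ℝ) (hlam : 0 < lam) (f : ℝ → ℝ) (a : ℕ → ℝ)
    (ha : Summable fun n : ℕ => |a n| * lam ^ n)
    (hf : ∀ x ∈ Set.Icc (0 : ℝ) lam, HasSum (fun n : ℕ => a n * x ^ n) (f x)) :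
    HasSum (fun n : ℕ => a n / ((n : ℝ) + 1) * lam ^ (n + 1)) (∫ x in (0 : ℝ)..lam, f x) := by
  have h := intervalIntegral.hasSum_integral_of_dominated_convergence
    (μ := MeasureTheory.volume) (a := 0) (b := lam) (f := f)
    (F := fun (n : ℕ) (x : ℝ) => a n * x ^ n) (fun n _ => |a n| * lam ^ n)
    (fun n => (by fun_prop : Continuous fun x : ℝ => a n * x ^ n).aestronglyMeasurable)
    (fun n => Filter.Eventually.of_forall fun x hx => by
      rw [Set.uIoc_of_le hlam.le] at hx
      rw [norm_mul, norm_pow, Real.norm_eq_abs, Real.norm_of_nonneg hx.1.le]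
      have := hx.1.le
      have := hx.2
      gcongr)
    (Filter.Eventually.of_forall fun _ _ => ha)
    (by simp)
    (Filter.Eventually.of_forall fun x hx => by
      rw [Set.uIoc_of_le hlam.le] at hx
      exact hf x ⟨hx.1.le, hx.2⟩)
  refine h.congr_fun fun n => ?_
  rw [intervalIntegral.integral_const_mul, integral_pow]
  simp
  ring

/-- Binomial-formula theorem: for `f` given on `[0, λ]` by a power series
`f x = ∑ a n * x ^ n` with radius of convergence `> λ`, the integral
`∫_0^λ f` equals `∑_{n} (λ/(λ+1))^{n+1} / (n+1) * ∑_{m ≤ n} b m` where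
`b` is the binomial transform of `a`. -/
theorem binomial_formula_integral (lam : ℝ) (hlam : 0 < lam) (f : ℝ → ℝ) (a : ℕ → ℝ)
    (hrad : ∃ r : ℝ, lam < r ∧ Summable fun n : ℕ => |a n| * r ^ n)
    (hf : ∀ x ∈ Set.Icc (0 : ℝ) lam, HasSum (fun n : ℕ => a n * x ^ n) (f x)) :
    HasSum
      (fun n : ℕ => (lam / (lam + 1)) ^ (n + 1) * (1 / ((n : ℝ) + 1)) *
        ∑ m ∈ Finset.range (n + 1), ∑ k ∈ Finset.range (m + 1), (m.choose k : ℝ) * a k)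
      (∫ x in (0 : ℝ)..lam, f x) := by
  obtain ⟨r, hr, hs⟩ := hrad
  have ha : Summable fun n : ℕ => |a n| * lam ^ n :=
    hs.of_nonneg_of_le (fun n => by positivity) fun n => by gcongr
  have hint := hasSum_integral_powerSeries lam hlam f a ha hf
  have ht : 0 ≤ lam / (lam + 1) := by positivity
  have hcol := choose_geometric_hasSum lam hlam
  have hcol' (k : ℕ) := (hcol k).mul_left (a k / ((k : ℝ) + 1))
  have hnorm (k n : ℕ) :
      ‖a k / ((k : ℝ) + 1) * ((n.choose k : ℝ) * (lam / (lam + 1)) ^ (n + 1))‖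
        = |a k| / ((k : ℝ) + 1) * ((n.choose k : ℝ) * (lam / (lam + 1)) ^ (n + 1)) := by
    rw [norm_mul, norm_div, Real.norm_eq_abs, Real.norm_of_nonneg (by positivity : 0 ≤ (k : ℝ) + 1),
      Real.norm_of_nonneg (by positivity)]
  have hF : Summable fun p : ℕ × ℕ =>
      a p.1 / ((p.1 : ℝ) + 1) * ((p.2.choose p.1 : ℝ) * (lam / (lam + 1)) ^ (p.2 + 1)) := by
    refine Summable.of_norm ((summable_prod_of_nonneg fun p => norm_nonneg _).2 ⟨fun k => ?_, ?_⟩)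
    · exact (hcol' k).summable.norm
    · simp only [hnorm]
      simp_rw [fun k => ((hcol k).mul_left (|a k| / ((k : ℝ) + 1))).tsum_eq]
      refine (ha.mul_right lam).of_nonneg_of_le (fun k => by positivity) fun k => ?_
      rw [pow_succ, ← mul_assoc]
      gcongr
      exact div_le_self (abs_nonneg _) (by simp)
  have hS := hF.hasSum
  rw [(hS.prod_fiberwise hcol').unique hint] at hS
  refine ((Equiv.prodComm ℕ ℕ).hasSum_iff.2 hS).prod_fiberwise fun n => ?_
  rw [term_eq]
  refine hasSum_sum_of_ne_finset_zero fun k hk => ?_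
  simp [Nat.choose_eq_zero_of_lt (show n < k by simpa [Nat.lt_succ_iff] using hk)]
end

section
/- Let f : ℝ → ℝ be given on [0, 1] by a power series f(x) = Σ_{n=0}^∞ a_n x^n whose radius of convergence is strictly greater than 1. Then ∫_0^1 f(x) dx = Σ_{n=0}^∞ 1/(2^{n+1}(n+1)) · Σ_{m=0}^n b_m, where b_n = Σ_{k=0}^n C(n,k) a_k is the binomial transform of the sequence (a_n). -/
open Finset

/-!
By the hockey-stick identity `∑_{m ≤ n} b m = ∑_{k ≤ n} C(n+1, k+1) a k`, and
`C(n+1, k+1) / (n+1) = C(n, k) / (k+1)`, so the `n`-th term of the series is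
`∑_{k ≤ n} C(n, k) / 2^(n+1) * (a k / (k+1))` (`binomial_term_eq`). For fixed `k` the negative
binomial series at `1/2` gives `∑_n C(n, k) / 2^(n+1) = 1` (`hasSum_choose_div_two_pow`).
Since `∑ |a k|` converges, the double family is absolutely summable, and interchanging
the two sums yields `∑ a k / (k+1)`, which is the integral computed term by term.
-/

lemma hasSum_choose_div_two_pow (k : ℕ) :
    HasSum (fun n : ℕ => (n.choose k : ℝ) / 2 ^ (n + 1)) 1 := by
  have h := (hasSum_choose_mul_geometric_of_norm_lt_one (𝕜 := ℝ) k (r := 1 / 2)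
    (by norm_num)).mul_left ((1 / 2 : ℝ) ^ (k + 1))
  have h1 : (1 / 2 : ℝ) ^ (k + 1) * (1 / (1 - 1 / 2) ^ (k + 1)) = 1 := by
    rw [show (1 : ℝ) - 1 / 2 = 1 / 2 by norm_num]
    field_simp
  rw [h1] at h
  rw [← (add_left_injective k).hasSum_iff]
  · refine h.congr_fun ?_
    intro n
    simp only [Function.comp, one_div, inv_pow]
    rw [show n + k + 1 = (k + 1) + n by ring, pow_add 2 (k + 1) n]
    field_simp
  · intro n hn
    have : n < k := by
      by_contra! hk
      exact hn ⟨n - k, Nat.sub_add_cancel hk⟩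
    simp [Nat.choose_eq_zero_of_lt this]

lemma binomial_term_eq (a : ℕ → ℝ) (n : ℕ) :
    1 / (2 ^ (n + 1) * ((n : ℝ) + 1)) *
        ∑ m ∈ range (n + 1), ∑ k ∈ range (m + 1), (m.choose k : ℝ) * a k =
      ∑ k ∈ range (n + 1), (n.choose k : ℝ) / 2 ^ (n + 1) * (a k / (k + 1)) := by
  have h1 : ∀ m ∈ range (n + 1), ∑ k ∈ range (m + 1), (m.choose k : ℝ) * a k =
      ∑ k ∈ range (n + 1), (m.choose k : ℝ) * a k := by
    intro m hm
    refine sum_subset (range_mono (by simpa using hm)) fun k _ hk => ?_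
    rw [Nat.choose_eq_zero_of_lt (by simpa using hk)]
    simp
  rw [sum_congr rfl h1, sum_comm, mul_sum]
  refine sum_congr rfl fun k _ => ?_
  rw [← sum_mul]
  have h2 : ∑ m ∈ range (n + 1), (m.choose k : ℝ) = ((n + 1).choose (k + 1) : ℝ) := by
    norm_cast
    rw [← Nat.sum_Icc_choose]
    symm
    refine sum_subset (fun m hm => by simp at hm ⊢; omega) fun m hm hm' => ?_
    simp only [mem_range, mem_Icc] at hm hm'
    exact Nat.choose_eq_zero_of_lt (by omega)
  have h3 : ((n : ℝ) + 1) * n.choose k = (n + 1).choose (k + 1) * (k + 1) := by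
    exact_mod_cast Nat.add_one_mul_choose_eq n k
  rw [h2]
  field_simp
  linear_combination -(a k) * h3

/-- For `f` given on `[0, 1]` by a power series `f x = ∑ a n * x ^ n` with radius of
convergence `> 1`, `∫_0^1 f = ∑_{n} 1/(2^{n+1}(n+1)) * ∑_{m ≤ n} b m` where `b` is the
binomial transform of `a`. -/
theorem binomial_formula_integral_one (f : ℝ → ℝ) (a : ℕ → ℝ)
    (hrad : ∃ r : ℝ, 1 < r ∧ Summable fun n : ℕ => |a n| * r ^ n)
    (hf : ∀ x ∈ Set.Icc (0 : ℝ) 1, HasSum (fun n : ℕ => a n * x ^ n) (f x)) :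
    HasSum
      (fun n : ℕ => 1 / (2 ^ (n + 1) * ((n : ℝ) + 1)) *
        ∑ m ∈ Finset.range (n + 1), ∑ k ∈ Finset.range (m + 1), (m.choose k : ℝ) * a k)
      (∫ x in (0 : ℝ)..1, f x) := by
  obtain ⟨r, hr, hs⟩ := hrad
  have ha : Summable fun n => |a n| :=
    hs.of_nonneg_of_le (fun n => abs_nonneg _) fun n =>
      le_mul_of_one_le_right (abs_nonneg _) (one_le_pow₀ hr.le)
  have hint : HasSum (fun k : ℕ => a k / ((k : ℝ) + 1)) (∫ x in (0 : ℝ)..1, f x) := by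
    have h := intervalIntegral.hasSum_integral_of_dominated_convergence
      (μ := MeasureTheory.volume) (a := 0) (b := 1) (f := f)
      (F := fun (n : ℕ) (x : ℝ) => a n * x ^ n) (fun n _ => |a n|)
      (fun n => by fun_prop)
      (fun n => Filter.Eventually.of_forall fun t ht => by
        rw [Set.uIoc_of_le zero_le_one] at ht
        rw [Real.norm_eq_abs, abs_mul, abs_pow, abs_of_pos ht.1]
        exact mul_le_of_le_one_right (abs_nonneg _) (pow_le_one₀ ht.1.le ht.2))
      (Filter.Eventually.of_forall fun t _ => ha)
      (by simp)
      (Filter.Eventually.of_forall fun t ht => by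
        rw [Set.uIoc_of_le zero_le_one] at ht
        exact hf t ⟨ht.1.le, ht.2⟩)
    simpa [integral_pow, div_eq_mul_inv] using h
  have hG : ∀ k : ℕ, HasSum (fun n : ℕ => (n.choose k : ℝ) / 2 ^ (n + 1) * (a k / (k + 1)))
      (a k / (k + 1)) := fun k => by
    simpa using (hasSum_choose_div_two_pow k).mul_right (a k / ((k : ℝ) + 1))
  have hGn : ∀ k : ℕ, HasSum
      (fun n : ℕ => ‖(n.choose k : ℝ) / 2 ^ (n + 1) * (a k / (k + 1))‖)
      |a k / (k + 1)| := fun k => by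
    have h := (hasSum_choose_div_two_pow k).mul_right |a k / ((k : ℝ) + 1)|
    rw [one_mul] at h
    refine h.congr_fun fun n => ?_
    rw [Real.norm_eq_abs, abs_mul,
      abs_of_nonneg (by positivity : (0 : ℝ) ≤ n.choose k / 2 ^ (n + 1))]
  have hsum : Summable fun p : ℕ × ℕ =>
      (p.2.choose p.1 : ℝ) / 2 ^ (p.2 + 1) * (a p.1 / (p.1 + 1)) := by
    refine Summable.of_norm ((summable_prod_of_nonneg fun _ => norm_nonneg _).2
      ⟨fun k => (hGn k).summable, ?_⟩)
    simp only [(hGn _).tsum_eq]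
    exact hint.summable.abs
  have htot := hsum.hasSum
  rw [(htot.prod_fiberwise hG).unique hint] at htot
  -- For fixed `n` the family in `k` is supported on `k ≤ n`.
  refine ((Equiv.prodComm ℕ ℕ).hasSum_iff.2 htot).prod_fiberwise fun n => ?_
  rw [binomial_term_eq]
  refine hasSum_sum_of_ne_finset_zero fun k hk => ?_
  simp [Nat.choose_eq_zero_of_lt (show n < k by simpa using hk)]
end

section
/- Let f : ℝ → ℝ be integrable on [0, ∞), and let (b_n) be a real sequence such that for all t ∈ [0, 1) one has (1/(1−t)) · f(t/(1−t)) = Σ_{n=0}^∞ b_n t^n (the series converging for each such t). If the series Σ_{n=0}^∞ (1/(n+1)) Σ_{m=0}^n b_m converges, then ∫_0^∞ f(x) dx = Σ_{n=0}^∞ (1/(n+1)) Σ_{m=0}^n b_m. -/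
open Finset Filter

/-!
Write `g t = ∑ b n * t ^ n` and `B n = ∑_{m ≤ n} b m`. By the Cauchy product with the geometric
series, `g t / (1 - t) = ∑ B n * t ^ n` on `[0, 1)`, and `G t = ∑ B n / (n + 1) * t ^ (n + 1)` is a
primitive of this function. The hypothesis `g t = f (t / (1 - t)) / (1 - t)` says, with
`t = x / (1 + x)`, that `x ↦ G (x / (1 + x))` has derivative `f` on `[0, ∞)`. It vanishes at `0`,
and as `x → ∞` it tends to `S` by Abel's limit theorem. As `f` is integrable, the fundamental theorem
of calculus on `[0, ∞)` gives the claim.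
-/

/-- A real power series that converges on `[0, 1)` converges absolutely there. -/
lemma summable_norm_of_tendsto {b : ℕ → ℝ} {g : ℝ → ℝ}
    (hb : ∀ t ∈ Set.Ico (0 : ℝ) 1,
      Tendsto (fun N : ℕ => ∑ n ∈ Finset.range N, b n * t ^ n) atTop (nhds (g t)))
    {t : ℝ} (ht : t ∈ Set.Ico (0 : ℝ) 1) : Summable fun n => ‖b n * t ^ n‖ := by
  obtain ⟨s, hts, hs⟩ := exists_between ht.2
  have hs0 : 0 ≤ s := ht.1.trans hts.le
  refine (summable_powerSeries_of_norm_lt (hb s ⟨hs0, hs⟩).cauchySeq ?_).norm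
  rwa [Real.norm_of_nonneg ht.1, Real.norm_of_nonneg hs0]

/-- The Cauchy product with the geometric series: dividing a power series by `1 - t` replaces its
coefficients by their partial sums. -/
lemma partialSums_powerSeries {b : ℕ → ℝ} {t : ℝ} (ht : t ∈ Set.Ico (0 : ℝ) 1)
    (hs : Summable fun n => ‖b n * t ^ n‖) :
    (Summable fun n => ‖(∑ m ∈ Finset.range (n + 1), b m) * t ^ n‖) ∧
      ∑' n, (∑ m ∈ Finset.range (n + 1), b m) * t ^ n = (∑' n, b n * t ^ n) * (1 - t)⁻¹ := by
  have ht' : ‖t‖ < 1 := by rw [Real.norm_of_nonneg ht.1]; exact ht.2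
  have hg : Summable fun n : ℕ => ‖t ^ n‖ := (summable_geometric_of_norm_lt_one ht').norm
  have key : ∀ n : ℕ, ∑ k ∈ Finset.range (n + 1), b k * t ^ k * t ^ (n - k)
      = (∑ m ∈ Finset.range (n + 1), b m) * t ^ n := by
    intro n
    rw [Finset.sum_mul]
    refine Finset.sum_congr rfl fun k hk => ?_
    rw [mul_assoc, ← pow_add, Nat.add_sub_cancel' (Nat.lt_succ_iff.1 (Finset.mem_range.1 hk))]
  have h1 := summable_norm_sum_mul_range_of_summable_norm hs hg
  have h2 := tsum_mul_tsum_eq_tsum_sum_range_of_summable_norm hs hg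
  simp_rw [key] at h1 h2
  rw [tsum_geometric_of_norm_lt_one ht'] at h2
  exact ⟨h1, h2.symm⟩

/-- Termwise differentiation of the primitive `∑ c n / (n + 1) * y ^ (n + 1)`. -/
lemma hasDerivAt_primitive {c : ℕ → ℝ}
    (hc : ∀ t ∈ Set.Ico (0 : ℝ) 1, Summable fun n => ‖c n * t ^ n‖)
    {t : ℝ} (ht : t ∈ Set.Ico (0 : ℝ) 1) :
    HasDerivAt (fun y => ∑' n : ℕ, 1 / ((n : ℝ) + 1) * c n * y ^ (n + 1))
      (∑' n, c n * t ^ n) t := by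
  obtain ⟨s, hts, hs⟩ := exists_between ht.2
  have hs0 : 0 < s := ht.1.trans_lt hts
  refine hasDerivAt_tsum_of_isPreconnected (u := fun n => ‖c n * s ^ n‖) (t := Set.Ioo (-s) s)
    (y₀ := 0) (g := fun (n : ℕ) (y : ℝ) => 1 / ((n : ℝ) + 1) * c n * y ^ (n + 1))
    (g' := fun n y => c n * y ^ n)
    (hc s ⟨hs0.le, hs⟩) isOpen_Ioo isPreconnected_Ioo ?_ ?_ ⟨by linarith, hs0⟩ ?_
    ⟨by linarith [ht.1], hts⟩
  · intro n y _
    have h := (hasDerivAt_pow (n + 1) y).const_mul (1 / ((n : ℝ) + 1) * c n)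
    have hn : (n : ℝ) + 1 ≠ 0 := by positivity
    convert! h using 1
    push_cast
    field_simp
  · intro n y hy
    rw [norm_mul, norm_mul, norm_pow, norm_pow, Real.norm_of_nonneg hs0.le]
    gcongr
    exact (abs_lt.2 hy).le
  · simp [summable_zero]

/-- If `f` is integrable on `[0, ∞)`, `(1/(1-t)) f(t/(1-t)) = ∑ b n * t^n` for all
`t ∈ [0, 1)`, and the series `∑_n (1/(n+1)) ∑_{m ≤ n} b m` converges, then
`∫_0^∞ f` equals the sum of that series. -/
theorem integral_eq_sum_of_binomial_series (f : ℝ → ℝ) (b : ℕ → ℝ) (S : ℝ)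
    (hf : MeasureTheory.IntegrableOn f (Set.Ici (0 : ℝ)))
    (hb : ∀ t ∈ Set.Ico (0 : ℝ) 1,
      Tendsto (fun N : ℕ => ∑ n ∈ Finset.range N, b n * t ^ n) atTop
        (nhds (1 / (1 - t) * f (t / (1 - t)))))
    (hS : Tendsto
      (fun N : ℕ => ∑ n ∈ Finset.range N,
        (1 / ((n : ℝ) + 1)) * ∑ m ∈ Finset.range (n + 1), b m) atTop (nhds S)) :
    ∫ x in Set.Ici (0 : ℝ), f x = S := by
  set B : ℕ → ℝ := fun n => ∑ m ∈ Finset.range (n + 1), b m with hB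
  have hBs : ∀ t ∈ Set.Ico (0 : ℝ) 1, Summable fun n => ‖B n * t ^ n‖ := fun t ht =>
    (partialSums_powerSeries ht (summable_norm_of_tendsto hb ht)).1
  set G : ℝ → ℝ := fun y => ∑' n : ℕ, 1 / ((n : ℝ) + 1) * B n * y ^ (n + 1) with hG
  have hGderiv : ∀ t ∈ Set.Ico (0 : ℝ) 1,
      HasDerivAt G (1 / (1 - t) * f (t / (1 - t)) * (1 - t)⁻¹) t := by
    intro t ht
    have hs := summable_norm_of_tendsto hb ht
    have hsum : ∑' n, b n * t ^ n = 1 / (1 - t) * f (t / (1 - t)) :=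
      tendsto_nhds_unique hs.of_norm.hasSum.tendsto_sum_nat (hb t ht)
    rw [← hsum, ← (partialSums_powerSeries ht hs).2]
    exact hasDerivAt_primitive hBs ht
  have hFderiv : ∀ x ∈ Set.Ici (0 : ℝ), HasDerivAt (fun x => G (x / (1 + x))) (f x) x := by
    intro x hx
    have hx0 : (0 : ℝ) ≤ x := hx
    have hx1 : 0 < 1 + x := by linarith
    have hmem : x / (1 + x) ∈ Set.Ico (0 : ℝ) 1 :=
      ⟨by positivity, by rw [div_lt_one hx1]; linarith⟩
    have hsub : 1 - x / (1 + x) = (1 + x)⁻¹ := by field_simp; ring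
    have hinner : HasDerivAt (fun x : ℝ => x / (1 + x)) (((1 + x) ^ 2)⁻¹) x := by
      convert! (hasDerivAt_id x).div ((hasDerivAt_id x).const_add 1) hx1.ne' using 1
      simp only [id]
      field_simp
      ring
    have h := (hGderiv _ hmem).comp x hinner
    have hxx : x / (1 + x) / (1 + x)⁻¹ = x := by field_simp
    rw [hsub, hxx] at h
    convert! h using 1
    field_simp
  have hlim : Tendsto (fun x : ℝ => x / (1 + x)) atTop (nhdsWithin 1 (Set.Iio 1)) := by
    refine tendsto_nhdsWithin_iff.2 ⟨?_, ?_⟩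
    · have h : Tendsto (fun x : ℝ => 1 - (1 + x)⁻¹) atTop (nhds (1 - 0)) :=
        tendsto_const_nhds.sub
          (tendsto_inv_atTop_zero.comp (tendsto_atTop_add_const_left atTop 1 tendsto_id))
      rw [sub_zero] at h
      refine h.congr' ?_
      filter_upwards [eventually_ge_atTop 0] with x hx
      have hx1 : 0 < 1 + x := by linarith
      field_simp
      ring
    · filter_upwards [eventually_ge_atTop 0] with x hx
      rw [Set.mem_Iio, div_lt_one (by linarith)]
      linarith
  have hGlim : Tendsto G (nhdsWithin 1 (Set.Iio 1)) (nhds S) := by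
    have hid : Tendsto (fun y : ℝ => y) (nhdsWithin 1 (Set.Iio 1)) (nhds 1) :=
      tendsto_id.mono_left nhdsWithin_le_nhds
    have h := hid.mul (Real.tendsto_tsum_powerSeries_nhdsWithin_lt hS)
    rw [one_mul] at h
    refine h.congr fun y => ?_
    rw [hG, ← tsum_mul_left]
    refine tsum_congr fun n => ?_
    rw [pow_succ]
    ring
  have hG0 : G 0 = 0 := by simp [hG]
  rw [MeasureTheory.integral_Ici_eq_integral_Ioi,
    MeasureTheory.integral_Ioi_of_hasDerivAt_of_tendsto' hFderiv
      (hf.mono_set Set.Ioi_subset_Ici_self) (hGlim.comp hlim)]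
  simp [hG0]
end

section
/- Let λ > 0 be a real number and let f : ℝ → ℝ be given on [0, λ] by a power series f(x) = Σ_{n=0}^∞ a_n x^n whose radius of convergence is strictly greater than λ. Then f(λ) = (1/(λ+1)^2) · Σ_{n=0}^∞ (λ/(λ+1))^n · Σ_{m=0}^n b_m, where b_n = Σ_{k=0}^n C(n,k) a_k is the binomial transform of the sequence (a_n). -/
open Finset

/-!
By the hockey-stick identity, `∑_{m ≤ n} b_m = ∑_{k ≤ n} C(n+1, k+1) a_k`
(`sum_binomial_transform`). With `q = λ/(λ+1)`, the negative binomial series gives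
`∑_j C(j+k+1, k+1) q^(j+k) = q^k / (1-q)^(k+2) = λ^k (λ+1)^2` (`hasSum_row`). Hence the double
family `a_k q^(j+k) C(j+k+1, k+1) / (λ+1)^2` has row sums `a_k λ^k`, so its total is `f λ`, while
its antidiagonal sums over `k + j = n` are the terms of the claimed series. The same row
computation applied to `|a_k|` shows that the family is absolutely summable, because
`∑ |a_k| λ^k` converges; this justifies the change of summation order.
-/

theorem sum_binomial_transform (a : ℕ → ℝ) (n : ℕ) :
    ∑ m ∈ Finset.range (n + 1), ∑ k ∈ Finset.range (m + 1), (m.choose k : ℝ) * a k =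
      ∑ k ∈ Finset.range (n + 1), ((n + 1).choose (k + 1) : ℝ) * a k := by
  induction n with
  | zero => simp
  | succ n ih =>
    rw [Finset.sum_range_succ, ih]
    have h : ∑ k ∈ Finset.range (n + 1), ((n + 1).choose (k + 1) : ℝ) * a k =
        ∑ k ∈ Finset.range (n + 1 + 1), ((n + 1).choose (k + 1) : ℝ) * a k := by
      rw [Finset.sum_range_succ _ (n + 1), Nat.choose_succ_self]
      simp
    rw [h, ← Finset.sum_add_distrib]
    refine Finset.sum_congr rfl fun k _ => ?_
    rw [Nat.choose_succ_succ (n + 1) k]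
    push_cast
    ring

/-- Negative binomial series: the row sums of the double family. The coefficient `c` is arbitrary so
that the lemma serves both for `a k` and for `|a k|`. -/
theorem hasSum_row (lam : ℝ) (hlam : 0 < lam) (c : ℝ) (k : ℕ) :
    HasSum (fun j : ℕ => (1 / (lam + 1) ^ 2) * (lam / (lam + 1)) ^ (k + j) *
      (((k + j + 1).choose (k + 1) : ℝ) * c)) (c * lam ^ k) := by
  have hq : ‖lam / (lam + 1)‖ < 1 := by
    rw [Real.norm_of_nonneg (by positivity), div_lt_one (by positivity)]
    linarith
  have h := (hasSum_choose_mul_geometric_of_norm_lt_one (k + 1) hq).mul_left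
    ((1 / (lam + 1) ^ 2) * (lam / (lam + 1)) ^ k * c)
  convert h using 1
  -- the two additive structures on `ℝ` agree only after unfolding
  · rfl
  · funext j
    rw [show k + j + 1 = j + (k + 1) by ring, pow_add]
    ring
  · have h1 : 1 - lam / (lam + 1) = 1 / (lam + 1) := by
      field_simp
      ring
    rw [h1, div_pow, div_pow, one_pow]
    field_simp
    ring

/-- Corollary 1.2: for `f` given on `[0, λ]` by a power series with radius of
convergence `> λ`, `f λ = (1/(λ+1)^2) ∑_n (λ/(λ+1))^n ∑_{m ≤ n} b m` where `b` is
the binomial transform of the Taylor coefficients of `f`. -/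
theorem binomial_formula_pointwise (lam : ℝ) (hlam : 0 < lam) (f : ℝ → ℝ) (a : ℕ → ℝ)
    (hrad : ∃ r : ℝ, lam < r ∧ Summable fun n : ℕ => |a n| * r ^ n)
    (hf : ∀ x ∈ Set.Icc (0 : ℝ) lam, HasSum (fun n : ℕ => a n * x ^ n) (f x)) :
    HasSum
      (fun n : ℕ => (1 / (lam + 1) ^ 2) * (lam / (lam + 1)) ^ n *
        ∑ m ∈ Finset.range (n + 1), ∑ k ∈ Finset.range (m + 1), (m.choose k : ℝ) * a k)
      (f lam) := by
  obtain ⟨r, hr, hsum⟩ := hrad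
  have habs : Summable fun k : ℕ => |a k| * lam ^ k :=
    hsum.of_nonneg_of_le (fun k => by positivity) fun k => by gcongr
  let F : ℕ × ℕ → ℝ := fun p => (1 / (lam + 1) ^ 2) * (lam / (lam + 1)) ^ (p.1 + p.2) *
    (((p.1 + p.2 + 1).choose (p.1 + 1) : ℝ) * a p.1)
  have hF : Summable F := by
    refine Summable.of_norm ?_
    have hnorm : ∀ p, ‖F p‖ = (1 / (lam + 1) ^ 2) * (lam / (lam + 1)) ^ (p.1 + p.2) *
        (((p.1 + p.2 + 1).choose (p.1 + 1) : ℝ) * |a p.1|) := fun p => by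
      simp only [F]
      rw [norm_mul, norm_mul _ (a p.1), Real.norm_of_nonneg (by positivity),
        Real.norm_of_nonneg (by positivity), Real.norm_eq_abs]
    simp only [hnorm]
    refine (summable_prod_of_nonneg fun p => by simp only [Pi.zero_apply]; positivity).2
      ⟨fun k => (hasSum_row lam hlam |a k| k).summable, ?_⟩
    simpa only [(hasSum_row lam hlam _ _).tsum_eq] using habs
  have hrows := hF.hasSum.prod_fiberwise fun k => hasSum_row lam hlam (a k) k
  have htotal : HasSum F (f lam) := by
    rw [← hrows.unique (hf lam ⟨hlam.le, le_rfl⟩)]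
    exact hF.hasSum
  have hdiag := ((Finset.HasAntidiagonal.sigmaAntidiagonalEquivProd (A := ℕ)).hasSum_iff.2 htotal).sigma
    -- each antidiagonal is finite
    fun n => hasSum_fintype _
  convert hdiag using 1
  funext n
  rw [sum_binomial_transform, Finset.mul_sum]
  symm
  calc _ = ∑ p ∈ Finset.HasAntidiagonal.antidiagonal n, F p :=
      Finset.sum_coe_sort (Finset.HasAntidiagonal.antidiagonal n) F
    _ = _ := by
      rw [Finset.Nat.sum_antidiagonal_eq_sum_range_succ_mk]
      refine Finset.sum_congr rfl fun k hk => ?_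
      have hkn : k + (n - k) = n := by
        have := Finset.mem_range.1 hk
        omega
      simp only [F, hkn]
end

section
/- The improper integral ∫_0^∞ log(1+t)/(t(1+t)) dt equals π²/6. -/
/-!
The substitution `t = exp u - 1` turns the integral into the Bose integral `∫_0^∞ u / (exp u - 1) du`.
Expanding `1 / (exp u - 1) = ∑ exp (-(n + 1) u)` as a geometric series and integrating termwise
(all terms are nonnegative, and the integrals are summable) gives `∑ 1 / (n + 1) ^ 2 = π² / 6`.
-/

open MeasureTheory Set in
lemma integral_log_div_mul_eq_bose :
    ∫ t in Ioi (0 : ℝ), Real.log (1 + t) / (t * (1 + t)) =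
      ∫ u in Ioi (0 : ℝ), u / (Real.exp u - 1) := by
  have himg : (fun u : ℝ => Real.exp u - 1) '' Ioi 0 = Ioi 0 := by
    ext t
    simp only [mem_image, mem_Ioi]
    constructor
    · rintro ⟨u, hu, rfl⟩
      linarith [Real.one_lt_exp_iff.2 hu]
    · intro ht
      exact ⟨Real.log (1 + t), Real.log_pos (by linarith),
        by rw [Real.exp_log (by linarith)]; ring⟩
  have h := integral_image_eq_integral_abs_deriv_smul (s := Ioi (0 : ℝ))
    (f := fun u : ℝ => Real.exp u - 1) (f' := Real.exp) measurableSet_Ioi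
    (fun u _ => ((Real.hasDerivAt_exp u).sub_const 1).hasDerivWithinAt)
    (fun a _ b _ hab => Real.exp_injective (by simpa using hab))
    (fun t => Real.log (1 + t) / (t * (1 + t)))
  rw [himg] at h
  rw [h]
  refine setIntegral_congr_fun measurableSet_Ioi fun u hu => ?_
  have h1 : Real.exp u - 1 ≠ 0 := (sub_pos.2 (Real.one_lt_exp_iff.2 hu)).ne'
  simp only [smul_eq_mul, abs_of_pos (Real.exp_pos u), add_sub_cancel, Real.log_exp]
  field_simp

lemma hasSum_bose_integrand {u : ℝ} (hu : 0 < u) :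
    HasSum (fun n : ℕ => u * Real.exp (-((n + 1 : ℝ) * u))) (u / (Real.exp u - 1)) := by
  have hlt : Real.exp (-u) < 1 := by simpa using hu
  have h := (hasSum_geometric_of_lt_one (Real.exp_pos (-u)).le hlt).mul_left (u * Real.exp (-u))
  have h1 : Real.exp u - 1 ≠ 0 := (sub_pos.2 (Real.one_lt_exp_iff.2 hu)).ne'
  have hsum : u / (Real.exp u - 1) = u * Real.exp (-u) * (1 - Real.exp (-u))⁻¹ := by
    rw [Real.exp_neg]
    field_simp
  rw [hsum]
  refine h.congr_fun fun n => ?_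
  rw [← Real.exp_nat_mul, mul_assoc, ← Real.exp_add]
  ring_nf

open MeasureTheory Set in
lemma integral_mul_exp_neg (n : ℕ) :
    ∫ u in Ioi (0 : ℝ), u * Real.exp (-((n + 1 : ℝ) * u)) = 1 / ((n + 1 : ℕ) : ℝ) ^ 2 := by
  have h := Real.integral_rpow_mul_exp_neg_mul_Ioi (a := 2) (r := (n + 1 : ℝ)) two_pos
    (by positivity)
  norm_num at h
  rw [h]
  norm_num

/-- `∫_0^∞ log(1+t)/(t(1+t)) dt = π²/6`. -/
theorem integral_log_div_mul : ∫ t in Set.Ioi (0 : ℝ), Real.log (1 + t) / (t * (1 + t)) =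
    Real.pi ^ 2 / 6 := by
  have hzeta : HasSum (fun n : ℕ => 1 / ((n + 1 : ℕ) : ℝ) ^ 2) (Real.pi ^ 2 / 6) := by
    simpa using (hasSum_nat_add_iff' 1).2 hasSum_zeta_two
  rw [integral_log_div_mul_eq_bose]
  have key := MeasureTheory.hasSum_integral_of_summable_integral_norm
    (μ := MeasureTheory.volume.restrict (Set.Ioi (0 : ℝ)))
    (F := fun (n : ℕ) (u : ℝ) => u * Real.exp (-((n + 1 : ℝ) * u)))
    (fun n => by
      -- A nonzero Bochner integral certifies integrability.
      refine MeasureTheory.Integrable.of_integral_ne_zero ?_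
      rw [integral_mul_exp_neg]
      positivity)
    (by
      refine hzeta.summable.congr fun n => ?_
      rw [← integral_mul_exp_neg]
      refine MeasureTheory.setIntegral_congr_fun measurableSet_Ioi fun u hu => ?_
      have hu' : 0 < u := hu
      exact (Real.norm_of_nonneg (by positivity)).symm)
  simp only [integral_mul_exp_neg] at key
  rw [← key.unique hzeta]
  exact MeasureTheory.setIntegral_congr_fun measurableSet_Ioi
    fun u hu => (hasSum_bose_integrand hu).tsum_eq.symm
end

section
/- For every natural number n, Σ_{k=0}^n C(n,k) (−1)^k H_{k+1}/(k+1) = 1/(n+1)², where H_m = 1 + 1/2 + ⋯ + 1/m denotes the m-th harmonic number. -/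
/-!
By the absorption identity `C(n,k)/(k+1) = C(n+1,k+1)/(n+1)`, the claim amounts to
`∑ C(n+1,k+1) (-1)^k H_{k+1} = 1/(n+1)`. Summation by parts (Pascal's rule,
`sum_choose_succ_by_parts`) replaces `H` by its forward difference `1/(k+1)`, leaving
`∑ C(n,k) (-1)^k / (k+1)`. Absorption turns this into `1/(n+1)` times
`∑ C(n+1,k+1) (-1)^k`, which is `1` by the same summation by parts applied to a constant.
-/

open Finset

/-- The `m`-th harmonic number `H_m = 1 + 1/2 + ⋯ + 1/m`, with `H_0 = 0`. -/
noncomputable def H (m : ℕ) : ℝ := ∑ j ∈ Finset.range m, 1 / ((j : ℝ) + 1)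

lemma choose_div_succ (n k : ℕ) :
    (n.choose k : ℝ) / ((k : ℝ) + 1) = ((n + 1).choose (k + 1) : ℝ) / ((n : ℝ) + 1) := by
  have h : ((n : ℝ) + 1) * n.choose k = (n + 1).choose (k + 1) * ((k : ℝ) + 1) := by
    exact_mod_cast Nat.add_one_mul_choose_eq n k
  have hk : (k : ℝ) + 1 ≠ 0 := by positivity
  have hn : (n : ℝ) + 1 ≠ 0 := by positivity
  rw [div_eq_div_iff hk hn]
  linarith

/-- Summation by parts for alternating binomial sums: the left side omits the term at index `0`
of the alternating sum of order `n + 1`, which reappears as `f 0` on the right. -/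
lemma sum_choose_succ_by_parts (n : ℕ) (f : ℕ → ℝ) :
    ∑ k ∈ range (n + 1), ((n + 1).choose (k + 1) : ℝ) * (-1) ^ k * f (k + 1) =
      f 0 + ∑ k ∈ range (n + 1), (n.choose k : ℝ) * (-1) ^ k * (f (k + 1) - f k) := by
  -- The sum over `range (n + 2)` is split at either end; its last term vanishes.
  have h : ∑ k ∈ range (n + 1), (n.choose (k + 1) : ℝ) * (-1) ^ (k + 1) * f (k + 1) + f 0 =
      ∑ k ∈ range (n + 1), (n.choose k : ℝ) * (-1) ^ k * f k := by
    have h1 := sum_range_succ' (fun k => (n.choose k : ℝ) * (-1) ^ k * f k) (n + 1)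
    have h2 := sum_range_succ (fun k => (n.choose k : ℝ) * (-1) ^ k * f k) (n + 1)
    simp only [Nat.choose_succ_self, Nat.choose_zero_right, Nat.cast_zero, Nat.cast_one,
      pow_zero, zero_mul, add_zero, one_mul] at h1 h2
    exact h1.symm.trans h2
  simp only [mul_sub, sum_sub_distrib]
  rw [← h, add_sub_assoc', sub_add_eq_sub_sub_swap, add_sub_cancel_left, ← sum_sub_distrib]
  refine sum_congr rfl fun k _ => ?_
  rw [Nat.choose_succ_succ, pow_succ]
  push_cast
  ring

lemma sum_choose_div_succ (n : ℕ) :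
    ∑ k ∈ range (n + 1), (n.choose k : ℝ) * (-1) ^ k * (1 / ((k : ℝ) + 1)) =
      1 / ((n : ℝ) + 1) := by
  have h := sum_choose_succ_by_parts n (fun _ => 1)
  simp only [mul_one, sub_self, mul_zero, sum_const_zero, add_zero] at h
  refine Eq.trans ?_ (congrArg (· / ((n : ℝ) + 1)) h)
  simp only [sum_div]
  refine sum_congr rfl fun k _ => ?_
  linear_combination (-1 : ℝ) ^ k * choose_div_succ n k

/-- `∑_{k=0}^n C(n,k) (−1)^k H_{k+1}/(k+1) = 1/(n+1)²`. -/
theorem binomial_harmonic_identity (n : ℕ) :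
    ∑ k ∈ Finset.range (n + 1), (n.choose k : ℝ) * (-1) ^ k * H (k + 1) / ((k : ℝ) + 1) =
      1 / ((n : ℝ) + 1) ^ 2 := by
  have hdiff (k : ℕ) : H (k + 1) - H k = 1 / ((k : ℝ) + 1) := by
    simp [H, sum_range_succ]
  have h := sum_choose_succ_by_parts n H
  simp only [hdiff, sum_choose_div_succ] at h
  have h0 : H 0 = 0 := by simp [H]
  rw [h0, zero_add] at h
  rw [pow_two, ← div_div, ← h, sum_div]
  refine sum_congr rfl fun k _ => ?_
  linear_combination (-1 : ℝ) ^ k * H (k + 1) * choose_div_succ n k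
end

section
/- The improper integral ∫_0^∞ (log(1+t)/t)² dt equals π²/3. -/
/-!
The substitution `t = exp u - 1` turns the integral into `∫ u in (0, ∞), u² eᵘ / (eᵘ - 1)²`.
With `x = e⁻ᵘ`, the geometric-type series `∑ n xⁿ = x / (1 - x)²` expands the integrand as
`∑ n u² e⁻ⁿᵘ`. All terms are nonnegative, and the `n`-th one integrates to
`n · Γ(3) / n³ = 2 / n²`, so the series may be integrated termwise and the value is
`2 ζ(2) = π² / 3`.
-/

open MeasureTheory Set in
lemma integral_sq_mul_exp_neg_nat (n : ℕ) :
    ∫ u in Ioi (0 : ℝ), (n : ℝ) * (u ^ 2 * Real.exp (-(n * u))) = 2 * (1 / (n : ℝ) ^ 2) := by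
  rcases Nat.eq_zero_or_pos n with rfl | hn
  · simp
  have hn' : (0 : ℝ) < n := by exact_mod_cast hn
  have h := Real.integral_rpow_mul_exp_neg_mul_Ioi (a := 3) (r := n) (by norm_num) hn'
  have hG : Real.Gamma 3 = 2 := by
    rw [show (3 : ℝ) = (2 : ℕ) + 1 by norm_num, Real.Gamma_nat_eq_factorial 2]
    norm_num [Nat.factorial]
  rw [hG] at h
  norm_num at h
  rw [integral_const_mul, h]
  field_simp

open MeasureTheory Set in
lemma integrableOn_sq_mul_exp_neg_nat (n : ℕ) :
    IntegrableOn (fun u : ℝ => (n : ℝ) * (u ^ 2 * Real.exp (-(n * u)))) (Ioi 0) := by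
  rcases Nat.eq_zero_or_pos n with rfl | hn
  · simp
  have hn' : (0 : ℝ) < n := by exact_mod_cast hn
  -- A function with nonzero Bochner integral is integrable.
  refine not_imp_comm.1 integral_undef ?_
  rw [integral_sq_mul_exp_neg_nat]
  positivity

/-- The series `∑ n xⁿ = x / (1 - x)²` at `x = e⁻ᵘ`, rewritten in terms of `eᵘ`. -/
lemma hasSum_sq_mul_exp_neg_nat {u : ℝ} (hu : 0 < u) :
    HasSum (fun n : ℕ => (n : ℝ) * (u ^ 2 * Real.exp (-(n * u))))
      (Real.exp u * (u / (Real.exp u - 1)) ^ 2) := by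
  have hx : ‖Real.exp (-u)‖ < 1 := by
    rw [Real.norm_eq_abs, Real.abs_exp, Real.exp_lt_one_iff]
    linarith
  have h := (hasSum_coe_mul_geometric_of_norm_lt_one hx).mul_left (u ^ 2)
  have h1 : Real.exp u - 1 ≠ 0 := by
    have := Real.add_one_lt_exp hu.ne'
    linarith
  convert! h using 1
  · funext n
    rw [← Real.exp_nat_mul]
    ring_nf
  · rw [Real.exp_neg]
    have h3 := Real.exp_ne_zero u
    have h4 : 1 - (Real.exp u)⁻¹ = (Real.exp u - 1) / Real.exp u := by field_simp
    rw [h4]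
    field_simp

open MeasureTheory Set in
lemma integral_exp_mul_sq_div :
    ∫ u in Ioi (0 : ℝ), Real.exp u * (u / (Real.exp u - 1)) ^ 2 = Real.pi ^ 2 / 3 := by
  have hz := hasSum_zeta_two.mul_left 2
  have hnorm : ∀ n : ℕ, ∫ u in Ioi (0 : ℝ), ‖(n : ℝ) * (u ^ 2 * Real.exp (-(n * u)))‖
      = 2 * (1 / (n : ℝ) ^ 2) := by
    intro n
    rw [← integral_sq_mul_exp_neg_nat]
    congr 1
    funext u
    exact Real.norm_of_nonneg (by positivity)
  have h := hasSum_integral_of_summable_integral_norm integrableOn_sq_mul_exp_neg_nat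
    (by simpa only [hnorm] using hz.summable)
  simp only [integral_sq_mul_exp_neg_nat] at h
  have he := h.unique hz
  rw [setIntegral_congr_fun measurableSet_Ioi
    (fun u hu => (hasSum_sq_mul_exp_neg_nat (mem_Ioi.1 hu)).tsum_eq)] at he
  rw [he]
  ring

/-- `∫_0^∞ (log(1+t)/t)² dt = π²/3`. -/
theorem integral_sq_log_div : ∫ t in Set.Ioi (0 : ℝ), (Real.log (1 + t) / t) ^ 2 =
    Real.pi ^ 2 / 3 := by
  have himg : (fun u : ℝ => Real.exp u - 1) '' Set.Ioi 0 = Set.Ioi 0 := by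
    ext t
    constructor
    · rintro ⟨u, hu, rfl⟩
      have := Real.one_lt_exp_iff.2 (Set.mem_Ioi.1 hu)
      exact sub_pos.2 this
    · intro ht
      have ht' : 0 < t := ht
      refine ⟨Real.log (1 + t), Real.log_pos (by linarith), ?_⟩
      simp only
      rw [Real.exp_log (by linarith)]
      ring
  have hcv := MeasureTheory.integral_image_eq_integral_abs_deriv_smul
    (s := Set.Ioi (0 : ℝ)) (f := fun u : ℝ => Real.exp u - 1) (f' := Real.exp)
    measurableSet_Ioi (fun u _ => ((Real.hasDerivAt_exp u).sub_const 1).hasDerivWithinAt)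
    (fun a _ b _ hab => Real.exp_injective (sub_left_injective hab))
    (fun t => (Real.log (1 + t) / t) ^ 2)
  rw [himg] at hcv
  rw [hcv, ← integral_exp_mul_sq_div]
  congr 1
  funext u
  simp
end

section
/- For every natural number n, Σ_{k=0}^n C(n,k) (−1)^k H_{k+1}/((k+1)(k+2)) = 1/(n+1)² + (H_n − 1)/((n+1)(n+2)), where H_m denotes the m-th harmonic number. -/
/-!
Since `C(n,k)/((k+1)(k+2)) = C(n+2,k+2)/((n+1)(n+2))`, the identity is equivalent to
`∑_k (-1)^k C(n+2,k+2) H_{k+1} = H_{n+1}`. Summation by parts, using that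
`(-1)^k C(n+2,k+2)` is the forward difference of `-(-1)^k C(n+1,k+1)` (lemma `sum_by_parts`),
turns the left side into `∑_j (-1)^j C(n+1,j+1)/(j+1)`, which is the classical binomial
expression for `H_{n+1}` (lemma `sum_choose_div_eq_H`).
-/

open Finset

lemma H_succ (m : ℕ) : H (m + 1) = H m + 1 / ((m : ℝ) + 1) := by
  simp [H, Finset.sum_range_succ]

lemma choose_div_succ_s9 (m j : ℕ) :
    (m.choose j : ℝ) / ((j : ℝ) + 1) = ((m + 1).choose (j + 1) : ℝ) / ((m : ℝ) + 1) := by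
  have h : ((m : ℝ) + 1) * m.choose j = (m + 1).choose (j + 1) * ((j : ℝ) + 1) := by
    exact_mod_cast Nat.add_one_mul_choose_eq m j
  rw [div_eq_div_iff (by positivity) (by positivity)]
  linarith

/-- The binomial expansion of `(1 - 1)^(m+1)` with its leading term `1` moved across. -/
lemma alternating_sum_choose_succ (m : ℕ) :
    ∑ j ∈ range (m + 1), (-1 : ℝ) ^ j * ((m + 1).choose (j + 1) : ℝ) = 1 := by
  have h := add_pow (-1 : ℝ) 1 (m + 1)
  rw [Finset.sum_range_succ'] at h
  simp only [neg_add_cancel, one_pow, mul_one, pow_succ, mul_zero, pow_zero, Nat.choose_zero_right,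
    Nat.cast_one, mul_neg, neg_mul, Finset.sum_neg_distrib] at h
  linarith

/-- By Pascal's rule both sides increase by `1/(m+1)` when `m` is replaced by `m + 1`. -/
lemma sum_choose_div_eq_H (m : ℕ) :
    ∑ j ∈ range m, (-1 : ℝ) ^ j * (m.choose (j + 1) : ℝ) / ((j : ℝ) + 1) = H m := by
  induction m with
  | zero => simp [H]
  | succ m ih =>
    have split : ∀ j : ℕ, (-1 : ℝ) ^ j * ((m + 1).choose (j + 1) : ℝ) / ((j : ℝ) + 1) =
        (-1 : ℝ) ^ j * ((m + 1).choose (j + 1) : ℝ) / ((m : ℝ) + 1) +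
          (-1 : ℝ) ^ j * (m.choose (j + 1) : ℝ) / ((j : ℝ) + 1) := by
      intro j
      rw [mul_div_assoc _ _ ((m : ℝ) + 1), ← choose_div_succ_s9, Nat.choose_succ_succ' m j]
      push_cast
      ring
    rw [Finset.sum_congr rfl fun j _ => split j, Finset.sum_add_distrib, ← Finset.sum_div,
      alternating_sum_choose_succ, Finset.sum_range_succ, ih, H_succ]
    simp [add_comm]

/-- Summation by parts, with its boundary term; that term vanishes at `N = n + 1`. -/
lemma sum_by_parts (n N : ℕ) :
    ∑ k ∈ range N, (-1 : ℝ) ^ k * ((n + 2).choose (k + 2) : ℝ) * H (k + 1) =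
      -(-1 : ℝ) ^ N * ((n + 1).choose (N + 1) : ℝ) * H N +
        ∑ j ∈ range N, (-1 : ℝ) ^ j * ((n + 1).choose (j + 1) : ℝ) / ((j : ℝ) + 1) := by
  induction N with
  | zero => simp [H]
  | succ N ih =>
    rw [Finset.sum_range_succ, Finset.sum_range_succ, ih, H_succ,
      Nat.choose_succ_succ' (n + 1) (N + 1)]
    push_cast
    ring

/-- `∑_{k=0}^n C(n,k) (−1)^k H_{k+1}/((k+1)(k+2)) = 1/(n+1)² + (H_n − 1)/((n+1)(n+2))`. -/
theorem binomial_harmonic_identity2 (n : ℕ) :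
    ∑ k ∈ Finset.range (n + 1),
        (n.choose k : ℝ) * (-1) ^ k * H (k + 1) / (((k : ℝ) + 1) * ((k : ℝ) + 2)) =
      1 / ((n : ℝ) + 1) ^ 2 + (H n - 1) / (((n : ℝ) + 1) * ((n : ℝ) + 2)) := by
  have absorb : ∀ k : ℕ,
      (n.choose k : ℝ) * (-1) ^ k * H (k + 1) / (((k : ℝ) + 1) * ((k : ℝ) + 2)) =
        (-1 : ℝ) ^ k * ((n + 2).choose (k + 2) : ℝ) * H (k + 1) /
          (((n : ℝ) + 1) * ((n : ℝ) + 2)) := by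
    intro k
    have h1 := choose_div_succ_s9 n k
    have h2 := choose_div_succ_s9 (n + 1) (k + 1)
    push_cast at h2
    rw [add_assoc, add_assoc, one_add_one_eq_two] at h2
    calc _ = (-1 : ℝ) ^ k * H (k + 1) * ((n.choose k : ℝ) / ((k : ℝ) + 1)) / ((k : ℝ) + 2) := by
          field_simp
      _ = (-1 : ℝ) ^ k * H (k + 1) *
            (((n + 1).choose (k + 1) : ℝ) / ((k : ℝ) + 2)) / ((n : ℝ) + 1) := by
          rw [h1]; field_simp
      _ = _ := by
          rw [h2]; field_simp; ring
  rw [Finset.sum_congr rfl fun k _ => absorb k, ← Finset.sum_div, sum_by_parts,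
    sum_choose_div_eq_H, H_succ, Nat.choose_eq_zero_of_lt (Nat.lt_succ_self (n + 1))]
  field_simp
  push_cast
  ring
end

section
/- ∫_0^1 Li₂(t/(1+t)) dt = π²/12 − (log 2)², where Li₂ is the dilogarithm function. -/
/-!
Termwise differentiation of the power series gives `Li₂'(y) = -log (1 - y) / y` for `0 < |y| < 1`,
and the Weierstrass M-test gives continuity of `Li₂` on `[-1, 1]`. Two consequences on `[0, 1]`:

* `(1 + t) Li₂(t/(1+t)) + Li₂(-t)` is an antiderivative of `Li₂(t/(1+t))`, so the integral equals
  `2 Li₂(1/2) + Li₂(-1)`;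
* `Li₂(t/(1+t)) + Li₂(-t) + log² (1 + t) / 2` has derivative zero and vanishes at `0` (Landen's
  identity), so `Li₂(1/2) = -Li₂(-1) - log² 2 / 2`.

Hence the integral is `-Li₂(-1) - log² 2`, and `Li₂(-1) = -π²/12` follows from `ζ(2) = π²/6` by
comparing `Li₂(1) + Li₂(-1)` with the sum over even indices.
-/

/-- The dilogarithm `Li₂(x) = ∑_{n=1}^∞ x^n/n²` (for `|x| ≤ 1`). -/
noncomputable def Li2 (x : ℝ) : ℝ := ∑' n : ℕ, x ^ (n + 1) / ((n : ℝ) + 1) ^ 2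

open Set

lemma summable_one_div_succ_sq : Summable fun n : ℕ => 1 / ((n : ℝ) + 1) ^ 2 := by
  have := (summable_nat_add_iff 1).2 (Real.summable_one_div_nat_pow.2 one_lt_two)
  simpa using this

lemma norm_Li2_term_le {x : ℝ} (hx : x ∈ Icc (-1 : ℝ) 1) (n : ℕ) :
    ‖x ^ (n + 1) / ((n : ℝ) + 1) ^ 2‖ ≤ 1 / ((n : ℝ) + 1) ^ 2 := by
  rw [norm_div, norm_pow, Real.norm_of_nonneg (by positivity : (0 : ℝ) ≤ ((n : ℝ) + 1) ^ 2)]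
  gcongr
  exact pow_le_one₀ (norm_nonneg _) (abs_le.2 hx)

lemma hasSum_Li2 {x : ℝ} (hx : x ∈ Icc (-1 : ℝ) 1) :
    HasSum (fun n : ℕ => x ^ (n + 1) / ((n : ℝ) + 1) ^ 2) (Li2 x) :=
  (Summable.of_norm_bounded summable_one_div_succ_sq (norm_Li2_term_le hx)).hasSum

lemma continuousOn_Li2 : ContinuousOn Li2 (Icc (-1) 1) :=
  continuousOn_tsum (fun n => by fun_prop) summable_one_div_succ_sq
    fun n _ hx => norm_Li2_term_le hx n

lemma Li2_zero : Li2 0 = 0 := by simp [Li2]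

lemma hasDerivAt_Li2 {y : ℝ} (hy : |y| < 1) (h0 : y ≠ 0) :
    HasDerivAt Li2 (-Real.log (1 - y) / y) y := by
  obtain ⟨r, hyr, hr1⟩ := exists_between hy
  have hr0 : 0 ≤ r := (abs_nonneg y).trans hyr.le
  have key : HasDerivAt Li2 (∑' n : ℕ, y ^ n / ((n : ℝ) + 1)) y := by
    refine hasDerivAt_tsum_of_isPreconnected (t := Ioo (-r) r) (u := fun n => r ^ n)
      (g := fun (n : ℕ) (x : ℝ) => x ^ (n + 1) / ((n : ℝ) + 1) ^ 2)
      (g' := fun (n : ℕ) (x : ℝ) => x ^ n / ((n : ℝ) + 1))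
      (summable_geometric_of_lt_one hr0 hr1) isOpen_Ioo isPreconnected_Ioo ?_ ?_
      (abs_lt.1 hyr) ?_ (abs_lt.1 hyr)
    · intro n x _
      refine ((hasDerivAt_pow (n + 1) x).div_const (((n : ℝ) + 1) ^ 2)).congr_deriv ?_
      have : (n : ℝ) + 1 ≠ 0 := by positivity
      push_cast
      field_simp
    · intro n x hx
      rw [norm_div, norm_pow, Real.norm_of_nonneg (by positivity : (0 : ℝ) ≤ (n : ℝ) + 1)]
      have h1 : ‖x‖ ^ n ≤ r ^ n := pow_le_pow_left₀ (norm_nonneg _) (abs_lt.2 hx).le n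
      refine (div_le_self (by positivity) ?_).trans h1
      linarith [(Nat.cast_nonneg n : (0 : ℝ) ≤ n)]
    · exact (hasSum_Li2 (abs_le.1 hy.le)).summable
  convert key using 1
  have h := (Real.hasSum_pow_div_log_of_abs_lt_one hy).div_const y
  rw [← h.tsum_eq]
  refine tsum_congr fun n => ?_
  rw [pow_succ]
  field_simp

lemma Li2_one : Li2 1 = Real.pi ^ 2 / 6 := by
  have h := (hasSum_nat_add_iff' 1).2 hasSum_zeta_two
  simpa [Li2] using h.tsum_eq

/-- In `Li₂(1) + Li₂(-1)` the odd-index terms cancel, and the even-index ones sum to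
`Li₂(1) / 2`. -/
lemma Li2_neg_one : Li2 (-1) = -(Real.pi ^ 2 / 12) := by
  have hs := (hasSum_Li2 (x := 1) (by norm_num)).add (hasSum_Li2 (x := -1) (by norm_num))
  have he : HasSum (fun k : ℕ => (1 : ℝ) ^ (2 * k + 1) / (((2 * k : ℕ) : ℝ) + 1) ^ 2
      + (-1 : ℝ) ^ (2 * k + 1) / (((2 * k : ℕ) : ℝ) + 1) ^ 2) 0 := by
    convert hasSum_zero (α := ℝ) (β := ℕ) using 2 with k
    rw [Odd.neg_one_pow ⟨k, rfl⟩]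
    ring
  have ho : HasSum (fun k : ℕ => (1 : ℝ) ^ (2 * k + 1 + 1) / (((2 * k + 1 : ℕ) : ℝ) + 1) ^ 2
      + (-1 : ℝ) ^ (2 * k + 1 + 1) / (((2 * k + 1 : ℕ) : ℝ) + 1) ^ 2) (1 / 2 * Li2 1) := by
    refine ((hasSum_Li2 (x := 1) (by norm_num)).mul_left (1 / 2)).congr_fun fun k => ?_
    rw [Even.neg_one_pow ⟨k + 1, by ring⟩]
    have : (k : ℝ) + 1 ≠ 0 := by positivity
    have h2 : (((2 * k + 1 : ℕ) : ℝ) + 1) = 2 * ((k : ℝ) + 1) := by push_cast; ring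
    rw [h2]
    simp only [one_pow]
    field_simp
    norm_num
  have h := hs.unique (HasSum.even_add_odd (f := fun n : ℕ => (1 : ℝ) ^ (n + 1) / ((n : ℝ) + 1) ^ 2
      + (-1 : ℝ) ^ (n + 1) / ((n : ℝ) + 1) ^ 2) he ho)
  rw [Li2_one] at h
  linarith

lemma div_one_add_mem {t : ℝ} (ht : t ∈ Icc (0 : ℝ) 1) : t / (1 + t) ∈ Icc (-1 : ℝ) 1 := by
  have h : 0 < 1 + t := by linarith [ht.1]
  have h0 : 0 ≤ t / (1 + t) := div_nonneg ht.1 h.le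
  exact ⟨by linarith, (div_le_one h).2 (by linarith)⟩

lemma continuousOn_Li2_div : ContinuousOn (fun t : ℝ => Li2 (t / (1 + t))) (Icc 0 1) := by
  refine continuousOn_Li2.comp (f := fun t : ℝ => t / (1 + t)) ?_ fun t ht => div_one_add_mem ht
  exact continuousOn_id.div (by fun_prop) fun t ht => by linarith [ht.1]

lemma continuousOn_Li2_neg : ContinuousOn (fun t : ℝ => Li2 (-t)) (Icc 0 1) :=
  continuousOn_Li2.comp (f := fun t : ℝ => -t) (by fun_prop) fun t ht =>
    ⟨by linarith [ht.2], by linarith [ht.1]⟩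

lemma hasDerivAt_Li2_div {t : ℝ} (ht : t ∈ Ioo (0 : ℝ) 1) :
    HasDerivAt (fun t : ℝ => Li2 (t / (1 + t))) (Real.log (1 + t) / (t * (1 + t))) t := by
  have h0 := ht.1
  have h : 0 < 1 + t := by linarith
  have hx : 0 < t / (1 + t) := div_pos h0 h
  have hx1 : t / (1 + t) < 1 := (div_lt_one h).2 (by linarith)
  have hd : HasDerivAt (fun t : ℝ => t / (1 + t)) ((1 * (1 + t) - t * 1) / (1 + t) ^ 2) t :=
    (hasDerivAt_id t).div ((hasDerivAt_id t).const_add 1) h.ne'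
  refine ((hasDerivAt_Li2 (abs_lt.2 ⟨by linarith, hx1⟩) hx.ne').comp t hd).congr_deriv ?_
  have hl : Real.log (1 - t / (1 + t)) = -Real.log (1 + t) := by
    rw [← Real.log_inv]
    congr 1
    field_simp
    ring
  rw [hl]
  field_simp
  ring

lemma hasDerivAt_Li2_neg {t : ℝ} (ht : t ∈ Ioo (0 : ℝ) 1) :
    HasDerivAt (fun t : ℝ => Li2 (-t)) (-(Real.log (1 + t) / t)) t := by
  have h0 := ht.1
  refine ((hasDerivAt_Li2 (y := -t) (by rw [abs_neg, abs_of_pos h0]; exact ht.2)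
    (by linarith)).comp t (hasDerivAt_neg t)).congr_deriv ?_
  rw [sub_neg_eq_add]
  field_simp

/-- Landen's identity `Li₂(t/(1+t)) + Li₂(-t) = -log² (1 + t) / 2` at `t = 1`. -/
lemma Li2_half : Li2 (1 / 2) = Real.pi ^ 2 / 12 - Real.log 2 ^ 2 / 2 := by
  have hc : ContinuousOn (fun t : ℝ => Li2 (t / (1 + t)) + Li2 (-t) + Real.log (1 + t) ^ 2 / 2)
      (Icc 0 1) := by
    refine (continuousOn_Li2_div.add continuousOn_Li2_neg).add ?_
    refine ContinuousOn.div_const (ContinuousOn.pow (ContinuousOn.log (by fun_prop) ?_) 2) 2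
    intro t ht
    linarith [ht.1]
  have h := intervalIntegral.integral_eq_sub_of_hasDerivAt_of_le zero_le_one hc (f' := fun _ => 0)
    (fun t ht => by
      have h0 := ht.1
      have h1 : 0 < 1 + t := by linarith
      have hl : HasDerivAt (fun t : ℝ => Real.log (1 + t)) (1 / (1 + t)) t :=
        ((hasDerivAt_id t).const_add 1).log h1.ne'
      convert ((hasDerivAt_Li2_div ht).fun_add (hasDerivAt_Li2_neg ht)).fun_add
        ((hl.fun_pow 2).div_const 2) using 1
      simp
      field_simp
      ring) (by simp)
  norm_num [Li2_zero, Li2_neg_one] at h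
  norm_num
  linarith

/-- `∫_0^1 Li₂(t/(1+t)) dt = π²/12 − (log 2)²`. -/
theorem integral_dilog_self_div : ∫ t in (0 : ℝ)..1, Li2 (t / (1 + t)) =
    Real.pi ^ 2 / 12 - Real.log 2 ^ 2 := by
  have hc : ContinuousOn (fun t : ℝ => (1 + t) * Li2 (t / (1 + t)) + Li2 (-t)) (Icc 0 1) :=
    (ContinuousOn.mul (by fun_prop) continuousOn_Li2_div).add continuousOn_Li2_neg
  rw [intervalIntegral.integral_eq_sub_of_hasDerivAt_of_le zero_le_one hc
    (fun t ht => by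
      have h0 := ht.1
      have h1 : 0 < 1 + t := by linarith
      convert (((hasDerivAt_id' t).const_add 1).fun_mul (hasDerivAt_Li2_div ht)).fun_add
        (hasDerivAt_Li2_neg ht) using 1
      simp
      field_simp
      ring)
    (ContinuousOn.intervalIntegrable (by
      rw [uIcc_of_le zero_le_one]; exact continuousOn_Li2_div))]
  have h2 : (1 : ℝ) / (1 + 1) = 1 / 2 := by norm_num
  rw [h2, Li2_half, Li2_neg_one]
  simp only [zero_div, neg_zero, Li2_zero]
  ring
end

section
/- For all natural numbers n and q with q ≤ n, Σ_{k=0}^n C(n,k) C(k,q) (−1)^k/(k+1) = (−1)^q/(n+1), where C(n,k) denotes the binomial coefficient. -/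
open Finset

/-!
Absorption, `C(n,k)/(k+1) = C(n+1,k+1)/(n+1)`, turns the sum into `1/(n+1)` times
`A(q) = ∑_{k ≤ n} (-1)^k C(n+1,k+1) C(k,q)`, so the claim is `A(q) = (-1)^q`
(`sum_choose_succ_mul_choose`). Pascal's rule gives
`A(q) + A(q+1) = ∑_{k ≤ n} (-1)^k C(n+1,k+1) C(k+1,q+1)`, and this vanishes for `q < n` because
`j ↦ C(j,q+1)` is a polynomial of degree less than `n+1`, hence annihilated by the `(n+1)`-st
finite difference (`sum_neg_one_pow_mul_choose_mul_choose`). The value `A(0) = 1` is the vanishing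
of the alternating sum of row `n+1` of Pascal's triangle.
-/

/-- The sum is `(-1)^N` times the `N`-th finite difference at `0` of `j ↦ C(j,m)`. By
`C(N,j) C(j,m) = C(N,m) C(N-m,j-m)`, it is a multiple of the alternating sum of row `N - m`. -/
lemma sum_neg_one_pow_mul_choose_mul_choose {N m : ℕ} (h : m < N) :
    ∑ j ∈ range (N + 1), (-1 : ℤ) ^ j * (N.choose j) * (j.choose m) = 0 := by
  obtain ⟨d, rfl⟩ := Nat.exists_eq_add_of_lt h
  rw [show m + d + 1 + 1 = m + (d + 1 + 1) by ring, sum_range_add, sum_eq_zero, zero_add]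
  · have key := Int.alternating_sum_range_choose_of_ne (n := d + 1) (by omega)
    calc _ = ∑ i ∈ range (d + 1 + 1), ((-1 : ℤ) ^ m * (m + d + 1).choose m) *
          ((-1) ^ i * (d + 1).choose i) := by
          refine sum_congr rfl fun i hi => ?_
          have hi' := mem_range.1 hi
          have := Nat.choose_mul (n := m + d + 1) (k := m + i) (s := m) (by omega)
          rw [show m + d + 1 - m = d + 1 by omega, Nat.add_sub_cancel_left] at this
          have hz : ((m + d + 1).choose (m + i) : ℤ) * (m + i).choose m =
              (m + d + 1).choose m * (d + 1).choose i := by exact_mod_cast this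
          rw [pow_add]
          linear_combination (-1 : ℤ) ^ m * (-1) ^ i * hz
      _ = 0 := by rw [← mul_sum, key, mul_zero]
  · intro j hj
    rw [Nat.choose_eq_zero_of_lt (mem_range.1 hj)]
    simp

lemma sum_choose_succ_mul_choose {n q : ℕ} (h : q ≤ n) :
    ∑ k ∈ range (n + 1), (-1 : ℤ) ^ k * ((n + 1).choose (k + 1)) * (k.choose q) = (-1) ^ q := by
  induction q with
  | zero =>
    have key := Int.alternating_sum_range_choose_of_ne (n := n + 1) (by omega)
    rw [sum_range_succ'] at key
    simp only [pow_succ, mul_neg, mul_one, neg_mul, sum_neg_distrib] at key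
    simp at key ⊢
    linarith
  | succ q ih =>
    have key := sum_neg_one_pow_mul_choose_mul_choose (N := n + 1) (m := q + 1) (by omega)
    rw [sum_range_succ', Nat.choose_zero_succ, Nat.cast_zero, mul_zero, add_zero] at key
    have split : ∑ k ∈ range (n + 1),
        (-1 : ℤ) ^ (k + 1) * ((n + 1).choose (k + 1)) * ((k + 1).choose (q + 1)) =
        -(∑ k ∈ range (n + 1), (-1 : ℤ) ^ k * ((n + 1).choose (k + 1)) * (k.choose q)) -
        ∑ k ∈ range (n + 1), (-1 : ℤ) ^ k * ((n + 1).choose (k + 1)) * (k.choose (q + 1)) := by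
      rw [← sum_neg_distrib, ← sum_sub_distrib]
      refine sum_congr rfl fun k _ => ?_
      rw [Nat.choose_succ_succ' k q]
      push_cast
      ring
    rw [ih (by omega), key] at split
    rw [pow_succ]
    linarith

/-- For `q ≤ n`, `∑_{k=0}^n C(n,k) C(k,q) (−1)^k/(k+1) = (−1)^q/(n+1)`. -/
theorem binomial_double_choose (n q : ℕ) (hqn : q ≤ n) :
    ∑ k ∈ Finset.range (n + 1), (n.choose k : ℝ) * (k.choose q : ℝ) * (-1) ^ k / ((k : ℝ) + 1) =
      (-1) ^ q / ((n : ℝ) + 1) := by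
  have key : ∑ k ∈ range (n + 1), (-1 : ℝ) ^ k * ((n + 1).choose (k + 1)) * (k.choose q) =
      (-1) ^ q := by exact_mod_cast sum_choose_succ_mul_choose hqn
  rw [← key, sum_div]
  refine sum_congr rfl fun k _ => ?_
  have absorb : ((n : ℝ) + 1) * n.choose k = (n + 1).choose (k + 1) * ((k : ℝ) + 1) := by
    exact_mod_cast Nat.add_one_mul_choose_eq n k
  have hn : (n : ℝ) + 1 ≠ 0 := by positivity
  have hk : (k : ℝ) + 1 ≠ 0 := by positivity
  rw [div_eq_div_iff hk hn]
  linear_combination (k.choose q : ℝ) * (-1) ^ k * absorb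
end

section
/- ∫_0^1 (log(1+x))²/x dx = ζ(3)/4, where ζ(3) = Σ_{n=1}^∞ 1/n³. -/
/-!
Write `a = log (1 - x)` and `b = log (1 + x)` on `(0, 1)`, and `ζ = ∑ 1/(n+1)³`. Three integrals
against `dx / x` are accessible:

* `∫ a² dx/x = 2ζ`, by `x ↦ 1 - x` and expansion of `log² x / (1 - x)` in a geometric series;
* `∫ (a + b)² dx/x = ∫ log² (1 - x²) dx/x = ζ`, half of the previous one, by `u = x²`;
* `∫ (a - b)² dx/x = 4 ∑ 1/(2n+1)³ = 7ζ/2`, by the involution `u = (1 - x) / (1 + x)` and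
  expansion of `2 log² u / (1 - u²)`.

Since `2b² = (a + b)² + (a - b)² - 2a²`, the result is `(ζ + 7ζ/2 - 4ζ) / 2 = ζ/4`. Both series
expansions are instances of `integral_log_sq_div`, which rests on the elementary
`∫ xᵐ log² x dx = 2/(m+1)³`. Integrability of the three functions follows from their
integrals being nonzero.
-/

open MeasureTheory Set

/-- The continuity at `0`, where `log 0 = 0`, comes from `x log² x = 4 (√x log √x)²`. -/
lemma continuousOn_mul_log_sq :
    ContinuousOn (fun x : ℝ => x * Real.log x ^ 2) (Icc 0 1) := by
  have h : Continuous (fun x : ℝ => 4 * (√x * Real.log √x) ^ 2) := by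
    have := Real.continuous_mul_log.comp Real.continuous_sqrt
    exact continuous_const.mul (this.pow 2)
  refine h.continuousOn.congr fun x hx => ?_
  have h1 : Real.log √x = Real.log x / 2 := Real.log_sqrt hx.1
  simp only [h1, mul_pow, Real.sq_sqrt hx.1]
  ring

lemma integral_pow_mul_log_sq (m : ℕ) :
    IntegrableOn (fun x : ℝ => x ^ m * Real.log x ^ 2) (Ioo 0 1) ∧
    ∫ x in Ioo (0 : ℝ) 1, x ^ m * Real.log x ^ 2 = 2 / ((m : ℝ) + 1) ^ 3 := by
  have hm : (m : ℝ) + 1 ≠ 0 := by positivity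
  -- an antiderivative, obtained by integrating by parts twice
  set F : ℝ → ℝ := fun x => x ^ m * (x * Real.log x ^ 2 / (m + 1)
    - 2 * (x * Real.log x) / (m + 1) ^ 2 + 2 * x / (m + 1) ^ 3) with hF
  have hc : ContinuousOn F (Icc 0 1) := by
    have h1 := continuousOn_mul_log_sq
    have h2 : ContinuousOn (fun x : ℝ => x * Real.log x) (Icc 0 1) :=
      Real.continuous_mul_log.continuousOn
    fun_prop
  have hd : ∀ x ∈ Ioo (0 : ℝ) 1, HasDerivAt F (x ^ m * Real.log x ^ 2) x := by
    intro x hx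
    have hx0 : x ≠ 0 := hx.1.ne'
    have hl := Real.hasDerivAt_log hx0
    have hi := hasDerivAt_id x
    have h : HasDerivAt (fun x : ℝ => x ^ (m + 1) * (Real.log x ^ 2 / (m + 1)
        - 2 * Real.log x / (m + 1) ^ 2 + 2 / (m + 1) ^ 3)) _ x :=
      (hasDerivAt_pow (m + 1) x).mul ((((hl.pow 2).div_const ((m : ℝ) + 1)).sub
        ((hl.const_mul 2).div_const (((m : ℝ) + 1) ^ 2))).add_const (2 / ((m : ℝ) + 1) ^ 3))
    have e : F = fun x : ℝ => x ^ (m + 1) * (Real.log x ^ 2 / (m + 1)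
        - 2 * Real.log x / (m + 1) ^ 2 + 2 / (m + 1) ^ 3) := by
      funext y
      simp only [hF]
      ring
    rw [e]
    refine h.congr_deriv ?_
    simp
    field_simp
    ring
  have hi : IntegrableOn (fun x : ℝ => x ^ m * Real.log x ^ 2) (Ioc 0 1) :=
    intervalIntegral.integrableOn_deriv_of_nonneg hc hd fun x hx =>
      mul_nonneg (pow_nonneg hx.1.le _) (sq_nonneg _)
  refine ⟨hi.mono_set Ioo_subset_Ioc_self, ?_⟩
  rw [← integral_Ioc_eq_integral_Ioo, ← intervalIntegral.integral_of_le zero_le_one,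
    intervalIntegral.integral_eq_sub_of_hasDerivAt_of_le zero_le_one hc hd
      ((intervalIntegrable_iff_integrableOn_Ioc_of_le zero_le_one).2 hi)]
  simp [hF]

lemma summable_zeta_three : Summable fun n : ℕ => 1 / ((n : ℝ) + 1) ^ 3 := by
  have := (summable_nat_add_iff 1).2 (Real.summable_one_div_nat_pow.2 (by norm_num : 1 < 3))
  simpa using this

lemma summable_arith_three {k : ℕ} (hk : 1 ≤ k) :
    Summable fun n : ℕ => 2 / (((k * n : ℕ) : ℝ) + 1) ^ 3 := by
  refine Summable.of_nonneg_of_le (fun n => by positivity) (fun n => ?_)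
    (summable_zeta_three.mul_left 2)
  rw [mul_one_div]
  have : (n : ℝ) ≤ ((k * n : ℕ) : ℝ) := by exact_mod_cast Nat.le_mul_of_pos_left n hk
  gcongr

/-- Termwise integration of the geometric series of `1 / (1 - xᵏ)`. -/
lemma integral_log_sq_div {k : ℕ} (hk : 1 ≤ k) :
    ∫ x in Ioo (0 : ℝ) 1, Real.log x ^ 2 / (1 - x ^ k)
      = ∑' n : ℕ, 2 / (((k * n : ℕ) : ℝ) + 1) ^ 3 := by
  have h := hasSum_integral_of_summable_integral_norm (μ := volume.restrict (Ioo (0 : ℝ) 1))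
    (F := fun (n : ℕ) (x : ℝ) => x ^ (k * n) * Real.log x ^ 2)
    (fun n => (integral_pow_mul_log_sq (k * n)).1) (by
      refine (summable_arith_three hk).congr fun n => ?_
      rw [← (integral_pow_mul_log_sq (k * n)).2]
      refine setIntegral_congr_fun measurableSet_Ioo fun x hx => ?_
      exact (Real.norm_of_nonneg (mul_nonneg (pow_nonneg hx.1.le _) (sq_nonneg _))).symm)
  simp only [(integral_pow_mul_log_sq _).2] at h
  rw [h.tsum_eq]
  refine setIntegral_congr_fun measurableSet_Ioo fun x hx => ?_
  have hx1 : x ^ k < 1 := pow_lt_one₀ hx.1.le hx.2 (by omega)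
  simp only [tsum_mul_right, pow_mul, tsum_geometric_of_lt_one (pow_nonneg hx.1.le k) hx1]
  ring

lemma tsum_odd_three :
    ∑' n : ℕ, 2 / (((2 * n : ℕ) : ℝ) + 1) ^ 3
      = 7 / 4 * ∑' n : ℕ, 1 / ((n : ℝ) + 1) ^ 3 := by
  have hodd := summable_arith_three (k := 2) (by norm_num)
  have e1 : ∀ n : ℕ, 1 / (((2 * n : ℕ) : ℝ) + 1) ^ 3
      = 1 / 2 * (2 / (((2 * n : ℕ) : ℝ) + 1) ^ 3) := fun n => by ring
  have e2 : ∀ n : ℕ, 1 / (((2 * n + 1 : ℕ) : ℝ) + 1) ^ 3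
      = 1 / 8 * (1 / ((n : ℝ) + 1) ^ 3) := fun n => by
    have : (n : ℝ) + 1 ≠ 0 := by positivity
    have h : (((2 * n + 1 : ℕ) : ℝ) + 1) = 2 * (n + 1) := by push_cast; ring
    rw [h]
    field_simp
    norm_num
  have h := tsum_even_add_odd (f := fun n : ℕ => 1 / ((n : ℝ) + 1) ^ 3)
    ((hodd.mul_left (1 / 2)).congr fun n => (e1 n).symm)
    ((summable_zeta_three.mul_left (1 / 8)).congr fun n => (e2 n).symm)
  simp only [e1, e2, tsum_mul_left] at h
  linarith

lemma integral_log_one_sub_sq :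
    ∫ x in Ioo (0 : ℝ) 1, Real.log (1 - x) ^ 2 / x
      = 2 * ∑' n : ℕ, 1 / ((n : ℝ) + 1) ^ 3 := by
  have himg : (fun x : ℝ => 1 - x) '' Ioo 0 1 = Ioo 0 1 := by simp
  have h := integral_image_eq_integral_abs_deriv_smul (s := Ioo (0 : ℝ) 1)
    (f := fun x => 1 - x) (f' := fun _ => -1) measurableSet_Ioo
    (fun x _ => ((hasDerivAt_id x).const_sub 1).hasDerivWithinAt)
    (fun x _ y _ hxy => by simpa using hxy)
    (fun x => Real.log x ^ 2 / (1 - x ^ 1))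
  rw [himg, integral_log_sq_div le_rfl] at h
  simp only [abs_neg, abs_one, one_smul, pow_one, sub_sub_cancel, one_mul] at h
  rw [← h, ← tsum_mul_left]
  exact tsum_congr fun n => by ring

lemma integral_log_one_sub_sq_sq :
    ∫ x in Ioo (0 : ℝ) 1, Real.log (1 - x ^ 2) ^ 2 / x
      = ∑' n : ℕ, 1 / ((n : ℝ) + 1) ^ 3 := by
  have himg : (fun x : ℝ => x ^ 2) '' Ioo 0 1 = Ioo 0 1 := by
    ext y
    constructor
    · rintro ⟨x, hx, rfl⟩
      exact ⟨pow_pos hx.1 2, pow_lt_one₀ hx.1.le hx.2 two_ne_zero⟩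
    · intro hy
      exact ⟨√y, ⟨Real.sqrt_pos.2 hy.1, by
        rw [Real.sqrt_lt' one_pos]; simpa using hy.2⟩, Real.sq_sqrt hy.1.le⟩
  have h := integral_image_eq_integral_abs_deriv_smul (s := Ioo (0 : ℝ) 1)
    (f := fun x => x ^ 2) (f' := fun x => 2 * x) measurableSet_Ioo
    (fun x _ => by simpa using (hasDerivAt_pow 2 x).hasDerivWithinAt)
    (fun x hx y hy hxy => (sq_eq_sq₀ hx.1.le hy.1.le).1 hxy)
    (fun x => Real.log (1 - x) ^ 2 / x)
  rw [himg, integral_log_one_sub_sq] at h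
  have e : ∫ x in Ioo (0 : ℝ) 1, |2 * x| • (Real.log (1 - x ^ 2) ^ 2 / x ^ 2)
      = ∫ x in Ioo (0 : ℝ) 1, 2 * (Real.log (1 - x ^ 2) ^ 2 / x) := by
    refine setIntegral_congr_fun measurableSet_Ioo fun x hx => ?_
    have hx0 : x ≠ 0 := hx.1.ne'
    have hp : 0 < 2 * x := by linarith [hx.1]
    simp only [abs_of_pos hp, smul_eq_mul]
    field_simp
  rw [e, integral_const_mul] at h
  linarith

lemma integral_log_div_sq :
    ∫ x in Ioo (0 : ℝ) 1, Real.log ((1 - x) / (1 + x)) ^ 2 / x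
      = 7 / 2 * ∑' n : ℕ, 1 / ((n : ℝ) + 1) ^ 3 := by
  have hmaps : ∀ x ∈ Ioo (0 : ℝ) 1, (1 - x) / (1 + x) ∈ Ioo (0 : ℝ) 1 := fun x hx => by
    have h0 := hx.1
    have h1 := hx.2
    exact ⟨div_pos (by linarith) (by linarith), by rw [div_lt_one (by linarith)]; linarith⟩
  have hinv : ∀ x ∈ Ioo (0 : ℝ) 1,
      (1 - (1 - x) / (1 + x)) / (1 + (1 - x) / (1 + x)) = x := fun x hx => by
    have h0 : 1 + x ≠ 0 := by linarith [hx.1]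
    have h2 : 1 + (1 - x) / (1 + x) = 2 / (1 + x) := by field_simp; ring
    rw [h2]
    field_simp
    ring
  have himg : (fun x : ℝ => (1 - x) / (1 + x)) '' Ioo 0 1 = Ioo 0 1 := by
    ext y
    constructor
    · rintro ⟨x, hx, rfl⟩
      exact hmaps x hx
    · exact fun hy => ⟨_, hmaps y hy, hinv y hy⟩
  have h := integral_image_eq_integral_abs_deriv_smul (s := Ioo (0 : ℝ) 1)
    (f := fun x => (1 - x) / (1 + x)) (f' := fun x => -(2 / (1 + x) ^ 2)) measurableSet_Ioo
    (fun x hx => by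
      have h0 : 1 + x ≠ 0 := by linarith [hx.1]
      refine ((((hasDerivAt_id x).const_sub 1).div
        ((hasDerivAt_id x).const_add 1) h0).congr_deriv ?_).hasDerivWithinAt
      simp only [id]
      field_simp
      ring)
    (fun x hx y hy hxy => by
      rw [← hinv x hx, ← hinv y hy]
      simp only at hxy
      rw [hxy])
    (fun x => Real.log x ^ 2 / (1 - x ^ 2))
  rw [himg, integral_log_sq_div one_le_two, tsum_odd_three] at h
  have e : ∫ x in Ioo (0 : ℝ) 1, |-(2 / (1 + x) ^ 2)| •
        (Real.log ((1 - x) / (1 + x)) ^ 2 / (1 - ((1 - x) / (1 + x)) ^ 2))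
      = ∫ x in Ioo (0 : ℝ) 1, 1 / 2 * (Real.log ((1 - x) / (1 + x)) ^ 2 / x) := by
    refine setIntegral_congr_fun measurableSet_Ioo fun x hx => ?_
    have hx0 : x ≠ 0 := hx.1.ne'
    have h0 : 1 + x ≠ 0 := by linarith [hx.1]
    have h2 : 1 - ((1 - x) / (1 + x)) ^ 2 = 4 * x / (1 + x) ^ 2 := by field_simp; ring
    have hp : 0 < 2 / (1 + x) ^ 2 := by positivity
    simp only [abs_neg, abs_of_pos hp, smul_eq_mul, h2]
    generalize Real.log ((1 - x) / (1 + x)) = L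
    field_simp
    ring
  rw [e, integral_const_mul] at h
  linarith

/-- `∫_0^1 (log(1+x))²/x dx = ζ(3)/4`, where `ζ(3) = ∑_{n=1}^∞ 1/n³`. -/
theorem integral_sq_log_one_add_div :
    ∫ x in (0 : ℝ)..1, Real.log (1 + x) ^ 2 / x = (∑' n : ℕ, 1 / ((n : ℝ) + 1) ^ 3) / 4 := by
  have hA := integral_log_one_sub_sq
  have hS := integral_log_one_sub_sq_sq
  have hD := integral_log_div_sq
  have hz : 0 < ∑' n : ℕ, 1 / ((n : ℝ) + 1) ^ 3 :=
    summable_zeta_three.tsum_pos (fun n => by positivity) 0 (by norm_num)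
  -- a non-integrable function would have integral `0`
  have iA := Integrable.of_integral_ne_zero (hA.trans_ne (by positivity))
  have iS := Integrable.of_integral_ne_zero (hS.trans_ne hz.ne')
  have iD := Integrable.of_integral_ne_zero (hD.trans_ne (by positivity))
  rw [intervalIntegral.integral_of_le zero_le_one, integral_Ioc_eq_integral_Ioo]
  have e : ∫ x in Ioo (0 : ℝ) 1, Real.log (1 + x) ^ 2 / x
      = ∫ x in Ioo (0 : ℝ) 1, (1 / 2 * (Real.log (1 - x ^ 2) ^ 2 / x
          + Real.log ((1 - x) / (1 + x)) ^ 2 / x) - Real.log (1 - x) ^ 2 / x) := by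
    refine setIntegral_congr_fun measurableSet_Ioo fun x hx => ?_
    have h0 : 1 + x ≠ 0 := by linarith [hx.1]
    have h1 : 1 - x ≠ 0 := by linarith [hx.2]
    have h2 : 1 - x ^ 2 = (1 - x) * (1 + x) := by ring
    simp only [h2, Real.log_mul h1 h0, Real.log_div h1 h0]
    ring
  have iSD := iS.add iD
  simp only [Pi.add_def] at iSD
  rw [e, integral_sub (iSD.const_mul _) iA, integral_const_mul,
    integral_add iS iD, hA, hS, hD]
  ring
end
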